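/- Let α ≤ β ≤ −1 be negative integers and let M = (M_i)_{i≥0} be real parameters with M_i ∉ {0,1}. Then for every n ∈ ℕ the polynomial P̂_n^{α,β;M} has degree exactly n, and its leading coefficient equals (2n+α+β)!·(−α−β−n−1)! / ((−1)^{n+α+β}·2^n·n!) if ⌈(−α−β)/2⌉ ≤ n ≤ −α−β−1, and equals (α+β+n+1)_n / (2^n·n!) otherwise. -/

import Mathlib

open Finset MeasureTheory

noncomputable section ExceptionalHahnJacobi

/-- Pochhammer symbol `(z)_m = z (z+1) ⋯ (z+m-1)`. -/
def poch (z : ℝ) (m : ℕ) : ℝ := ∏ i ∈ Finset.range m, (z + (i : ℝ))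

/-- Pochhammer symbol with integer exponent; `(z)_{-k} = 1 / ((z-1)(z-2)⋯(z-k))`. -/
def pochZ (z : ℝ) (m : ℤ) : ℝ :=
  if 0 ≤ m then poch z m.toNat else 1 / poch (z - ((-m).toNat : ℝ)) (-m).toNat

/-- Generalized binomial coefficient `C(z, k) = z(z-1)⋯(z-k+1)/k!`. -/
def genBinom (z : ℝ) (k : ℕ) : ℝ := (∏ i ∈ Finset.range k, (z - (i : ℝ))) / (k.factorial : ℝ)

/-- `λ^{a,b}(x) = x (x + a + b + 1)`. -/
def lam (a b x : ℝ) : ℝ := x * (x + a + b + 1)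

/-- Hahn polynomial `h_n^{a,b,N}(x)`. -/
def hahn (a b N : ℝ) (n : ℕ) (x : ℝ) : ℝ :=
  ∑ j ∈ Finset.range (n + 1),
    poch (-(n : ℝ)) j * poch (a + b + (n : ℝ) + 1) j * poch (-N + (j : ℝ)) (n - j) *
      poch (a + (j : ℝ) + 1) (n - j) * poch (-x) j / (j.factorial : ℝ)

/-- Dual Hahn polynomial `R_n^{a,b,N}(x)`. -/
def dualHahn (a b N : ℝ) (n : ℕ) (x : ℝ) : ℝ :=
  ∑ j ∈ Finset.range (n + 1),
    poch (-(n : ℝ)) j * poch (-N + (j : ℝ)) (n - j) * poch (a + (j : ℝ) + 1) (n - j) /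
        ((n.factorial : ℝ) * (-1 : ℝ) ^ j * (j.factorial : ℝ)) *
      ∏ i ∈ Finset.range j, (x - (i : ℝ) * (a + b + 1 + (i : ℝ)))

/-- Dual Hahn polynomial with integer degree; zero for negative degree. -/
def dualHahnZ (a b N : ℝ) (m : ℤ) (x : ℝ) : ℝ :=
  if 0 ≤ m then dualHahn a b N m.toNat x else 0

/-- Jacobi polynomial `P_n^{a,b}(x)`. -/
def jacobiP (a b : ℝ) (n : ℕ) (x : ℝ) : ℝ :=
  (2 : ℝ)⁻¹ ^ n * ∑ j ∈ Finset.range (n + 1),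
    genBinom ((n : ℝ) + a) j * genBinom ((n : ℝ) + b) (n - j) * (x - 1) ^ (n - j) * (x + 1) ^ j

/-- The function `φ_u^{α,β,N}(s,x)`, a normalized terminating ₃F₂. -/
def phiH (α β : ℤ) (N : ℝ) (u : ℕ) (s x : ℝ) : ℝ :=
  poch ((α : ℝ) + 1) (max u (-α - β - (u : ℤ) - 1).toNat) *
    poch (-N) (max u (-α - β - (u : ℤ) - 1).toNat) *
    ∑ j ∈ Finset.range (u + 1),
      poch (-(u : ℝ)) j * poch ((u : ℝ) - s + (α : ℝ) + (β : ℝ) + 1) j * poch (-x) j /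
        (poch ((α : ℝ) - s + 1) j * poch (-N) j * (j.factorial : ℝ))

/-- The polynomials `Ĥ_n^{α,β,N;M}(x)`. -/
def Hhat (α β : ℤ) (N : ℝ) (M : ℕ → ℝ) (n : ℕ) (x : ℝ) : ℝ :=
  if ⌈((-α - β : ℤ) : ℚ) / 2⌉ ≤ (n : ℤ) ∧ (n : ℤ) ≤ -α - 1 then
    deriv (fun s => phiH α β N n s x) 0 -
      deriv (fun s => phiH α β N (-α - β - (n : ℤ) - 1).toNat s x) 0
  else if -α ≤ (n : ℤ) ∧ (n : ℤ) ≤ -α - β - 1 then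
    (-1 : ℝ) ^ ((β : ℤ) + (n : ℤ)) * ((β + (n : ℤ)).toNat.factorial : ℝ) *
      (((-α - β - (n : ℤ) - 1).toNat.factorial : ℝ) * poch (-x) (-α).toNat *
          hahn (-(α : ℝ)) (β : ℝ) ((α : ℝ) + N) ((α + (n : ℤ)).toNat) (x + (α : ℝ)) +
        (((α + (n : ℤ)).toNat.factorial : ℝ)) *
            poch (-N - (α : ℝ) - (β : ℝ) - (n : ℝ) - 1) (2 * (n : ℤ) + α + β + 1).toNat /
            (M ((α + (n : ℤ)).toNat) - 1) *
          hahn (α : ℝ) (β : ℝ) N ((-α - β - (n : ℤ) - 1).toNat) x)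
  else hahn (α : ℝ) (β : ℝ) N n x

/-- The function `φ_u^{α,β}(s,x)`, a normalized terminating ₂F₁. -/
def phiJ (α β : ℤ) (u : ℕ) (s x : ℝ) : ℝ :=
  poch ((α : ℝ) + 1) (max u (-α - β - (u : ℤ) - 1).toNat) /
      ((max u.factorial (-α - β - (u : ℤ) - 1).toNat.factorial : ℕ) : ℝ) *
    ∑ j ∈ Finset.range (u + 1),
      poch (-(u : ℝ)) j * poch ((u : ℝ) - s + (α : ℝ) + (β : ℝ) + 1) j /
          (poch ((α : ℝ) - s + 1) j * (j.factorial : ℝ)) * ((1 - x) / 2) ^ j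

/-- The polynomials `P̂_n^{α,β;M}(x)`. -/
def Phat (α β : ℤ) (M : ℕ → ℝ) (n : ℕ) (x : ℝ) : ℝ :=
  if ⌈((-α - β : ℤ) : ℚ) / 2⌉ ≤ (n : ℤ) ∧ (n : ℤ) ≤ -α - 1 then
    deriv (fun s => phiJ α β n s x) 0 -
      deriv (fun s => phiJ α β (-α - β - (n : ℤ) - 1).toNat s x) 0
  else if -α ≤ (n : ℤ) ∧ (n : ℤ) ≤ -α - β - 1 then
    (-1 : ℝ) ^ ((β : ℤ) + (n : ℤ)) *
      ((((n : ℤ) + α).toNat.factorial : ℝ) * (((n : ℤ) + β).toNat.factorial : ℝ) *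
        ((-α - β - (n : ℤ) - 1).toNat.factorial : ℝ)) / (n.factorial : ℝ) *
      ((M ((α + (n : ℤ)).toNat) - 1)⁻¹ * jacobiP (α : ℝ) (β : ℝ) ((-α - β - (n : ℤ) - 1).toNat) x +
        ((1 - x) / 2) ^ (-α).toNat * jacobiP (-(α : ℝ)) (β : ℝ) ((α + (n : ℤ)).toNat) x)
  else jacobiP (α : ℝ) (β : ℝ) n x

/-- `u_F = Σ_{f ∈ F} f - C(n_F + 1, 2)`. -/
def uF (F : Finset ℕ) : ℕ := (∑ f ∈ F, f) - (F.card + 1).choose 2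

/-- `n ∈ σ_F = {u_F, u_F + 1, …} \ {u_F + f : f ∈ F}`. -/
def inSigma (F : Finset ℕ) (n : ℕ) : Prop := uF F ≤ n ∧ n - uF F ∉ F

/-- The `i`-th element of `F` in increasing order. -/
def elemOf (F : Finset ℕ) (i : Fin F.card) : ℕ := ((F.orderIsoOfFin rfl i : {x // x ∈ F}) : ℕ)

/-- The `i`-th element of a finite set of integers, in increasing order. -/
def elemOfZ (S : Finset ℤ) (i : Fin S.card) : ℤ := ((S.orderIsoOfFin rfl i : {x // x ∈ S}) : ℤ)

/-- Exceptional Hahn polynomial `h_n^{α,β,N;M,F}(x)`. -/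
def exHahn (α β : ℤ) (N : ℝ) (M : ℕ → ℝ) (F : Finset ℕ) (n : ℕ) (x : ℝ) : ℝ :=
  Matrix.det (Matrix.of fun i j : Fin (F.card + 1) =>
    Fin.cases (Hhat α β N M (n - uF F) (x + ((j : ℕ) : ℝ)))
      (fun k => Hhat α β N M (elemOf F k) (x + ((j : ℕ) : ℝ))) i)

/-- The polynomial `Ω_{M,F}^{α,β,N}(x)`. -/
def OmegaH (α β : ℤ) (N : ℝ) (M : ℕ → ℝ) (F : Finset ℕ) (x : ℝ) : ℝ :=
  Matrix.det (Matrix.of fun i j : Fin F.card =>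
    Hhat α β N M (elemOf F i) (x + ((j : ℕ) : ℝ)))

/-- The polynomial `Λ_{M,F}^{α,β,N}(x)` (columns `j ∈ {1,…,n_F+1}`, `j ≠ n_F`). -/
def LambdaH (α β : ℤ) (N : ℝ) (M : ℕ → ℝ) (F : Finset ℕ) (x : ℝ) : ℝ :=
  Matrix.det (Matrix.of fun i j : Fin F.card =>
    Hhat α β N M (elemOf F i)
      (x + ((if (j : ℕ) = F.card - 1 then F.card else (j : ℕ) : ℕ) : ℝ)))

/-- Exceptional Jacobi polynomial `P_n^{α,β;M,F}(x)`. -/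
def exJacobi (α β : ℤ) (M : ℕ → ℝ) (F : Finset ℕ) (n : ℕ) (x : ℝ) : ℝ :=
  Matrix.det (Matrix.of fun i j : Fin (F.card + 1) =>
    Fin.cases (iteratedDeriv (j : ℕ) (Phat α β M (n - uF F)) x)
      (fun k => iteratedDeriv (j : ℕ) (Phat α β M (elemOf F k)) x) i)

/-- The polynomial `Ω_{M,F}^{α,β}(x)`. -/
def OmegaJ (α β : ℤ) (M : ℕ → ℝ) (F : Finset ℕ) (x : ℝ) : ℝ :=
  Matrix.det (Matrix.of fun i j : Fin F.card =>
    iteratedDeriv (j : ℕ) (Phat α β M (elemOf F i)) x)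

/-- `F_ext = F \ {-β, …, -α-β-1}`. -/
def Fext (α β : ℤ) (F : Finset ℕ) : Finset ℕ :=
  F.filter fun f : ℕ => ((f : ℤ) < -β ∨ -α - β ≤ (f : ℤ))

/-- Admissibility of the data `α, β, M, F`. -/
def IsAdmissible (α β : ℤ) (M : ℕ → ℝ) (F : Finset ℕ) : Prop :=
  (∀ i : ℕ, (i : ℤ) ≤ -β - 1 → (∀ f ∈ F, (i : ℤ) ≠ -β - (f : ℤ) - 1) →
      Real.sign (M i) =
        Real.sign (∏ f ∈ Fext α β F, (((i : ℝ) - (f : ℝ) - (α : ℝ)) * ((i : ℝ) + (f : ℝ) + (β : ℝ) + 1)))) ∧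
  (∀ x : ℤ, 0 ≤ x → (∃ f ∈ F, x ≤ (f : ℤ) + α + β) →
      0 ≤ ∏ f ∈ F.filter (fun f : ℕ => -α - β ≤ (f : ℤ)), (x - (f : ℤ) - α - β))

/-- `U_{F-} = {f + α + β : f ∈ F, 1 ≤ f ≤ -β-1}`. -/
def UFm (α β : ℤ) (F : Finset ℕ) : Finset ℤ :=
  (F.filter fun f : ℕ => (1 ≤ f ∧ (f : ℤ) ≤ -β - 1)).image fun f : ℕ => (f : ℤ) + α + β

/-- `U_{F+} = {f + α + β : f ∈ F, f ≥ -α-β}`. -/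
def UFp (α β : ℤ) (F : Finset ℕ) : Finset ℤ :=
  (F.filter fun f : ℕ => -α - β ≤ (f : ℤ)).image fun f : ℕ => (f : ℤ) + α + β

/-- `U_F = U_{F-} ∪ U_{F+}`. -/
def UF (α β : ℤ) (F : Finset ℕ) : Finset ℤ := UFm α β F ∪ UFp α β F

/-- The weight of the measure `ω_{α,β,N}^{M,F}` at the point `x`. -/
def wH (α β : ℤ) (N : ℕ) (M : ℕ → ℝ) (F : Finset ℕ) (x : ℕ) : ℝ :=
  genBinom ((α : ℝ) + (F.card : ℝ) + (x : ℝ)) x *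
      genBinom ((β : ℝ) + (N : ℝ) - (x : ℝ)) (N - F.card - x) /
    (OmegaH α β (N : ℝ) M F (x : ℝ) * OmegaH α β (N : ℝ) M F ((x : ℝ) + 1))

/-- The weight `ω_{α,β;M,F}(x)` on `[-1,1]`. -/
def wJ (α β : ℤ) (M : ℕ → ℝ) (F : Finset ℕ) (x : ℝ) : ℝ :=
  (1 - x) ^ (α + (F.card : ℤ)) * (1 + x) ^ (β + (F.card : ℤ)) / (OmegaJ α β M F x) ^ 2

/-- The measure on `[-1,1]` with density `ω_{α,β;M,F}`. -/
def jacobiMeasure (α β : ℤ) (M : ℕ → ℝ) (F : Finset ℕ) : Measure ℝ :=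
  (volume.restrict (Set.Icc (-1 : ℝ) 1)).withDensity fun x => ENNReal.ofReal (wJ α β M F x)

/-- Mass of the dual Hahn measure `ρ_{b,a,N̂}` at `λ^{a,b}(x)`. -/
def rhoMass (a b Nh : ℤ) (x : ℕ) : ℝ :=
  (2 * (x : ℝ) + (a : ℝ) + (b : ℝ) + 1) * poch ((b : ℝ) + 1) x * poch (-(Nh : ℝ)) x *
      (Nh.toNat.factorial : ℝ) /
    ((-1 : ℝ) ^ x * poch ((x : ℝ) + (a : ℝ) + (b : ℝ) + 1) (Nh + 1).toNat *
      poch ((a : ℝ) + 1) x * (x.factorial : ℝ))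

/-- Mass of the measure `ν_{a,b,N̂}^{M}` at `λ^{a,b}(s)`. -/
def nuMass (a b Nh : ℤ) (M : ℕ → ℝ) (s : ℤ) : ℝ :=
  if -b ≤ s ∧ s ≤ -1 then
    (2 * (s : ℝ) + (a : ℝ) + (b : ℝ) + 1) * poch ((Nh : ℝ) + 1 - (s : ℝ)) (s + b).toNat /
        poch ((Nh : ℝ) + (b : ℝ) + 1) (s + a + 1).toNat * M ((s + b).toNat)
  else if 0 ≤ s ∧ s ≤ Nh then
    poch ((Nh : ℝ) + 1) b.toNat ^ 2 / poch ((b : ℝ) + 1) (a - b).toNat * rhoMass a b Nh s.toNat /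
      ∏ i ∈ Finset.range b.toNat, (((s : ℝ) + (a : ℝ) + (i : ℝ) + 1) * ((s : ℝ) + (b : ℝ) - (i : ℝ)))
  else 0

/-- `ζ_v` (defined for any integer `v` via `pochZ`). -/
def zetaH (α β : ℤ) (N : ℝ) (v : ℤ) : ℝ :=
  pochZ (-N - (α : ℝ) - (β : ℝ)) v * poch ((v : ℝ) + 1) (-α).toNat *
    ((v - α - β).toNat.factorial : ℝ)

/-- `θ_v^M`. -/
def thetaM (β : ℤ) (M : ℕ → ℝ) (v : ℕ) : ℝ :=
  if (v : ℤ) ≤ -β - 1 then 1 - M ((-β - 1 - (v : ℤ)).toNat) else 1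

/-- `τ_v = ∏_{u ∈ U_F} (λ^{a,b}(v+α+β) - λ^{a,b}(u))` with `a = -α`, `b = -β`. -/
def tauH (α β : ℤ) (F : Finset ℕ) (v : ℕ) : ℝ :=
  ∏ u ∈ UF α β F,
    (lam ((-α : ℤ) : ℝ) ((-β : ℤ) : ℝ) ((v : ℝ) + (α : ℝ) + (β : ℝ)) -
      lam ((-α : ℤ) : ℝ) ((-β : ℤ) : ℝ) ((u : ℤ) : ℝ))

/-- `ξ_n`. -/
def xiH (α β : ℤ) (N : ℝ) (F : Finset ℕ) (n : ℕ) : ℝ :=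
  pochZ (N - (n : ℝ) + 1) ((n : ℤ) + α + β) ^ (α + (F.card : ℤ) + 1) *
    ∏ j ∈ Finset.range (F.card + 1), poch (N - (n : ℝ) - (j : ℝ) + 1) j

/-- `κ_M`. -/
def kappaM (α β : ℤ) (N : ℝ) (M : ℕ → ℝ) (F : Finset ℕ) : ℝ :=
  (∏ u ∈ UFm α β F, (1 - M ((-u + α - 1).toNat))) * ∏ u ∈ UF α β F, zetaH α β N u

/-- Entry `(i,j)` (0-based) of the determinant defining `q_n^{a,b,N̂;M,U_F}`. -/
def qEntry (α β : ℤ) (N : ℝ) (M : ℕ → ℝ) (F : Finset ℕ) (n : ℕ) (x : ℝ) (i j : ℕ) : ℝ :=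
  if i = 0 then
    (-1 : ℝ) ^ j * dualHahnZ (((-α).toNat : ℝ)) (((-β).toNat : ℝ)) (N + (α : ℝ) + (β : ℝ))
      ((n : ℤ) - (-α).toNat + j) x
  else if h1 : i - 1 < (UFm α β F).card then
    (-1 : ℝ) ^ j * dualHahnZ (((-α).toNat : ℝ)) (((-β).toNat : ℝ)) (N + (α : ℝ) + (β : ℝ))
      ((n : ℤ) - (-α).toNat + j)
      (lam (((-α).toNat : ℝ)) (((-β).toNat : ℝ)) ((elemOfZ (UFm α β F) ⟨i - 1, h1⟩ : ℤ) : ℝ))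
  else if i - 1 - (UFm α β F).card < (-α).toNat then
    poch (((-α).toNat : ℝ) + ((-β).toNat : ℝ) + (N + (α : ℝ) + (β : ℝ)) - (n : ℝ) - (j : ℝ) + 1) j *
      Hhat α β (-2 - (N + (α : ℝ) + (β : ℝ))) M ((-β).toNat + (i - 1 - (UFm α β F).card))
        (-(n : ℝ) + ((-α).toNat : ℝ) - (j : ℝ) - 1)
  else if h3 : i - 1 - (UFm α β F).card - (-α).toNat < (UFp α β F).card then
    (-1 : ℝ) ^ j * dualHahnZ (((-α).toNat : ℝ)) (((-β).toNat : ℝ)) (N + (α : ℝ) + (β : ℝ))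
      ((n : ℤ) - (-α).toNat + j)
      (lam (((-α).toNat : ℝ)) (((-β).toNat : ℝ))
        ((elemOfZ (UFp α β F) ⟨i - 1 - (UFm α β F).card - (-α).toNat, h3⟩ : ℤ) : ℝ))
  else 0

/-- The Krall dual Hahn orthogonal polynomial `q_n^{a,b,N̂;M,U_F}(x)`. -/
def qKrall (α β : ℤ) (N : ℝ) (M : ℕ → ℝ) (F : Finset ℕ) (n : ℕ) (x : ℝ) : ℝ :=
  Matrix.det (Matrix.of fun i j : Fin (1 + (UFm α β F).card + (-α).toNat + (UFp α β F).card) =>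
      qEntry α β N M F n x (i : ℕ) (j : ℕ)) /
    ((-1 : ℝ) ^ ((n + (-α).toNat + (-β).toNat) * ((UF α β F).card + 1) +
        ((-α).toNat + (-β).toNat).choose 2 + ((-β).toNat).choose 2 + (-α).toNat) *
      ∏ u ∈ UF α β F, (x - lam (((-α).toNat : ℝ)) (((-β).toNat : ℝ)) ((u : ℤ) : ℝ)))

/-- Row used in the renormalized determinant `P̄`: for `-α ≤ g ≤ -α-β-1` it is
`(M_{α+g} - 1) · P̂_g` written without the division by `M_{α+g} - 1`. -/
def PhatBarRow (α β : ℤ) (M : ℕ → ℝ) (g : ℕ) (x : ℝ) : ℝ :=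
  if -α ≤ (g : ℤ) ∧ (g : ℤ) ≤ -α - β - 1 then
    (-1 : ℝ) ^ ((β : ℤ) + (g : ℤ)) *
      ((((g : ℤ) + α).toNat.factorial : ℝ) * (((g : ℤ) + β).toNat.factorial : ℝ) *
        ((-α - β - (g : ℤ) - 1).toNat.factorial : ℝ)) / (g.factorial : ℝ) *
      (jacobiP (α : ℝ) (β : ℝ) ((-α - β - (g : ℤ) - 1).toNat) x +
        (M ((α + (g : ℤ)).toNat) - 1) * ((1 - x) / 2) ^ (-α).toNat *
          jacobiP (-(α : ℝ)) (β : ℝ) ((α + (g : ℤ)).toNat) x)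
  else Phat α β M g x

/-- The renormalized exceptional Jacobi polynomial
`P̄_n^{α,β;M,F} = (∏_{i=0}^{-β-1} (M_i - 1)) · P_n^{α,β;M,F}`
(written so that the factors `M_i - 1` are distributed into the corresponding rows of the
determinant; this agrees with the product formula whenever all `M_i ≠ 1`). -/
def Pbar (α β : ℤ) (M : ℕ → ℝ) (F : Finset ℕ) (n : ℕ) (x : ℝ) : ℝ :=
  (∏ i ∈ (Finset.range (-β).toNat).filter
      (fun i : ℕ => (((i : ℤ) - α).toNat ∉ F ∧ ((i : ℤ) - α).toNat ≠ n - uF F)), (M i - 1)) *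
    Matrix.det (Matrix.of fun r j : Fin (F.card + 1) =>
      Fin.cases (iteratedDeriv (j : ℕ) (PhatBarRow α β M (n - uF F)) x)
        (fun k => iteratedDeriv (j : ℕ) (PhatBarRow α β M (elemOf F k)) x) r)

end ExceptionalHahnJacobi

/-!
Knowing only a degree bound and the coefficient in that degree is enough to compute with sums,
products and powers. The top coefficient of `P_n^{α,β}` is a Vandermonde convolution,
`∑ j, C(n+α, j) C(n+β, n-j) = C(2n+α+β, n)`, which settles `P̂_n` outside the middle range and, for
`-α ≤ n`, also inside it, the summand `P_{-α-β-n-1}^{α,β}` having too low a degree to contribute.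
For `n < -α` only `∂_s φ_n` contributes in degree `n`: with `v = -α-β-n-1 < n`, its top coefficient
contains the factor `(-v-s)_n`, which vanishes at `s = 0`, so its derivative there comes from the
simple root `-v` of the Pochhammer polynomial.
-/

section

open Polynomial
open scoped Nat

/-- `f` is a polynomial function of degree at most `n`, and `c` (possibly zero) is the coefficient
of `x ^ n`. This is the information about degrees that propagates through ring operations. -/
def HasTopCoeff {R : Type*} [CommRing R] (f : R → R) (n : ℕ) (c : R) : Prop :=
  ∃ p : R[X], (∀ x, f x = p.eval x) ∧ p.natDegree ≤ n ∧ p.coeff n = c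

namespace HasTopCoeff

variable {R : Type*} [CommRing R] {f g : R → R} {m n : ℕ} {c d : R}

theorem linear (a b : R) : HasTopCoeff (fun x => a * x + b) 1 a :=
  ⟨C a * X + C b, fun x => by simp, natDegree_linear_le, by simp [coeff_C]⟩

theorem of_lt (hf : HasTopCoeff f m c) (hmn : m < n) : HasTopCoeff f n 0 := by
  obtain ⟨p, hp, hdeg, -⟩ := hf
  exact ⟨p, hp, by lia, coeff_eq_zero_of_natDegree_lt (by lia)⟩

theorem add (hf : HasTopCoeff f n c) (hg : HasTopCoeff g n d) :
    HasTopCoeff (fun x => f x + g x) n (c + d) := by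
  obtain ⟨p, hp, hpn, rfl⟩ := hf
  obtain ⟨q, hq, hqn, rfl⟩ := hg
  exact ⟨p + q, fun x => by simp only [hp, hq, eval_add], natDegree_add_le_of_degree_le hpn hqn,
    coeff_add p q n⟩

theorem const_mul (hf : HasTopCoeff f n c) (a : R) : HasTopCoeff (fun x => a * f x) n (a * c) := by
  obtain ⟨p, hp, hpn, rfl⟩ := hf
  exact ⟨C a * p, fun x => by simp only [hp, eval_C_mul], (natDegree_C_mul_le a p).trans hpn,
    coeff_C_mul p⟩

theorem sub (hf : HasTopCoeff f n c) (hg : HasTopCoeff g n d) :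
    HasTopCoeff (fun x => f x - g x) n (c - d) := by
  simpa only [neg_one_mul, ← sub_eq_add_neg] using hf.add (hg.const_mul (-1))

theorem mul (hf : HasTopCoeff f m c) (hg : HasTopCoeff g n d) :
    HasTopCoeff (fun x => f x * g x) (m + n) (c * d) := by
  obtain ⟨p, hp, hpm, rfl⟩ := hf
  obtain ⟨q, hq, hqn, rfl⟩ := hg
  exact ⟨p * q, fun x => by simp only [hp, hq, eval_mul], natDegree_mul_le_of_le hpm hqn,
    coeff_mul_add_eq_of_natDegree_le hpm hqn⟩

theorem pow (hf : HasTopCoeff f n c) (k : ℕ) : HasTopCoeff (fun x => f x ^ k) (k * n) (c ^ k) := by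
  obtain ⟨p, hp, hpn, rfl⟩ := hf
  exact ⟨p ^ k, fun x => by simp only [hp, eval_pow], natDegree_pow_le_of_le k hpn,
    coeff_pow_of_natDegree_le hpn⟩

theorem pow_of_linear (hf : HasTopCoeff f 1 c) (k : ℕ) :
    HasTopCoeff (fun x => f x ^ k) k (c ^ k) := by
  simpa only [mul_one] using hf.pow k

theorem sum {ι : Type*} {s : Finset ι} {F : ι → R → R} {e : ι → R}
    (hF : ∀ i ∈ s, HasTopCoeff (F i) n (e i)) :
    HasTopCoeff (fun x => ∑ i ∈ s, F i x) n (∑ i ∈ s, e i) := by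
  choose! p hp hdeg hcoeff using hF
  refine ⟨∑ i ∈ s, p i, fun x => ?_, natDegree_sum_le_of_forall_le _ _ hdeg, ?_⟩
  · rw [eval_finsetSum]
    exact sum_congr rfl fun i hi => hp i hi x
  · rw [finsetSum_coeff]
    exact sum_congr rfl hcoeff

theorem sum_mul_pow (hg : HasTopCoeff g 1 d) (e : ℕ → R) (n : ℕ) :
    HasTopCoeff (fun x => ∑ j ∈ range (n + 1), e j * g x ^ j) n (e n * d ^ n) := by
  have monomial_term (j : ℕ) : HasTopCoeff (fun x => e j * g x ^ j) j (e j * d ^ j) :=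
    (hg.pow_of_linear j).const_mul (e j)
  have lower_terms : HasTopCoeff (fun x => ∑ j ∈ range n, e j * g x ^ j) n 0 := by
    simpa only [sum_const_zero] using
      HasTopCoeff.sum fun j hj => (monomial_term j).of_lt (mem_range.mp hj)
  simpa only [sum_range_succ, zero_add] using lower_terms.add (monomial_term n)

theorem exists_degree_eq_leadingCoeff_eq (hf : HasTopCoeff f n c) (hc : c ≠ 0) :
    ∃ p : R[X], (∀ x, f x = p.eval x) ∧ p.degree = n ∧ p.leadingCoeff = c := by
  obtain ⟨p, hp, hdeg, rfl⟩ := hf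
  have hnat : p.natDegree = n := natDegree_eq_of_le_of_coeff_ne_zero hdeg hc
  exact ⟨p, hp, degree_eq_of_le_of_coeff_ne_zero (natDegree_le_iff_degree_le.mp hdeg) hc,
    by rw [leadingCoeff, hnat]⟩

end HasTopCoeff

theorem poch_eq_eval_ascPochhammer (z : ℝ) (m : ℕ) : poch z m = (ascPochhammer ℝ m).eval z := by
  induction m with
  | zero => simp [poch]
  | succ m ih => rw [ascPochhammer_succ_eval, ← ih, poch, prod_range_succ, ← poch]

theorem poch_eq_zero_iff {z : ℝ} {m : ℕ} : poch z m = 0 ↔ ∃ i < m, z + i = 0 := by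
  simp only [poch, prod_eq_zero_iff, mem_range]

theorem poch_intCast_ne_zero {z : ℤ} {m : ℕ} (hz : 0 < z ∨ z + m ≤ 0) : poch z m ≠ 0 := by
  rw [Ne, poch_eq_zero_iff]
  rintro ⟨i, hi, hzero⟩
  norm_cast at hzero
  lia

theorem poch_add (z : ℝ) (m k : ℕ) : poch z (m + k) = poch z m * poch (z + m) k := by
  simp only [poch, prod_range_add, Nat.cast_add, add_assoc]

theorem factorial_mul_poch_natCast_add_one (k m : ℕ) : (k ! : ℝ) * poch (k + 1) m = (k + m)! := by
  rw [poch_eq_eval_ascPochhammer, factorial_mul_ascPochhammer]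

theorem poch_one (m : ℕ) : poch 1 m = m ! := by
  rw [poch_eq_eval_ascPochhammer, ascPochhammer_eval_one]

theorem poch_neg_natCast_self (m : ℕ) : poch (-m) m = (-1) ^ m * m ! := by
  rw [poch_eq_eval_ascPochhammer, ascPochhammer_eval_neg_eq_descPochhammer,
    descPochhammer_eval_eq_descFactorial, Nat.descFactorial_self]

@[fun_prop]
theorem differentiable_poch (m : ℕ) : Differentiable ℝ fun z => poch z m := by
  unfold poch
  fun_prop

theorem hasDerivAt_poch_neg_natCast (v w : ℕ) :
    HasDerivAt (fun z => poch z (v + 1 + w)) ((-1) ^ v * v ! * w !) (-v) := by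
  let cofactor (z : ℝ) : ℝ := poch z v * poch (z + v + 1) w
  have poch_eq (z : ℝ) : poch z (v + 1 + w) = (z + v) * cofactor z := by
    have poch_single : poch (z + v) 1 = z + v := by simp [poch]
    rw [poch_add, poch_add, poch_single]
    simp only [cofactor, Nat.cast_add, Nat.cast_one, ← add_assoc]
    ring
  have cofactor_root : cofactor (-v) = (-1) ^ v * v ! * w ! := by
    simp only [cofactor, neg_add_cancel, zero_add, poch_neg_natCast_self, poch_one]
  have cofactor_deriv : DifferentiableAt ℝ cofactor (-v) := by fun_prop
  have product_deriv := ((hasDerivAt_id (-(v : ℝ))).add_const (v : ℝ)).mul cofactor_deriv.hasDerivAt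
  simpa [funext poch_eq, cofactor_root, Pi.mul_def] using product_deriv

theorem genBinom_eq_poch_div (z : ℝ) (k : ℕ) : genBinom z k = poch (z - k + 1) k / k ! := by
  rw [genBinom, ← descPochhammer_eval_eq_prod_range, descPochhammer_eval_eq_ascPochhammer,
    poch_eq_eval_ascPochhammer]

theorem genBinom_eq_choose (z : ℝ) (k : ℕ) : genBinom z k = Ring.choose z k := by
  rw [genBinom, ← descPochhammer_eval_eq_prod_range, Ring.choose_eq_smul, ← aeval_eq_smeval,
    aeval_def, ← eval_map, descPochhammer_map, smul_eq_mul, div_eq_inv_mul]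

theorem sum_genBinom_mul_genBinom (y z : ℝ) (n : ℕ) :
    ∑ j ∈ range (n + 1), genBinom y j * genBinom z (n - j) = genBinom (y + z) n := by
  simp only [genBinom_eq_choose]
  rw [Ring.add_choose_eq n (Commute.all y z), Nat.sum_antidiagonal_eq_sum_range_succ_mk]

theorem hasTopCoeff_jacobiP (a b : ℝ) (n : ℕ) :
    HasTopCoeff (jacobiP a b n) n (poch (a + b + n + 1) n / (2 ^ n * n !)) := by
  have hsub : HasTopCoeff (fun x : ℝ => x - 1) 1 1 := by
    simpa [← sub_eq_add_neg] using HasTopCoeff.linear (1 : ℝ) (-1)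
  have hadd : HasTopCoeff (fun x : ℝ => x + 1) 1 1 := by
    simpa using HasTopCoeff.linear (1 : ℝ) 1
  have hterm (j : ℕ) (hj : j ∈ range (n + 1)) :
      HasTopCoeff
        (fun x => genBinom (n + a) j * genBinom (n + b) (n - j) * (x - 1) ^ (n - j) * (x + 1) ^ j)
        n (genBinom (n + a) j * genBinom (n + b) (n - j)) := by
    simpa only [one_pow, mul_one, Nat.sub_add_cancel (mem_range_succ_iff.mp hj)] using
      ((hsub.pow_of_linear (n - j)).const_mul
        (genBinom (n + a) j * genBinom (n + b) (n - j))).mul (hadd.pow_of_linear j)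
  convert! (HasTopCoeff.sum hterm).const_mul (2⁻¹ ^ n) using 1
  rw [sum_genBinom_mul_genBinom, genBinom_eq_poch_div,
    show (n : ℝ) + a + (n + b) - n + 1 = a + b + n + 1 by ring, inv_pow]
  field_simp

theorem hasTopCoeff_one_sub_div_two : HasTopCoeff (fun x : ℝ => (1 - x) / 2) 1 (-1 / 2) := by
  convert! HasTopCoeff.linear (-1 / 2 : ℝ) (1 / 2) using 2
  ring

/-- The coefficient of `((1 - x) / 2) ^ j` in `φ_u^{α,β}(s, x)`, normalization included. -/
noncomputable def phiJCoeff (α β : ℤ) (u j : ℕ) (s : ℝ) : ℝ :=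
  poch (α + 1) (max u (-α - β - u - 1).toNat) /
      ((max u ! (-α - β - u - 1).toNat ! : ℕ) : ℝ) *
    (poch (-u) j * poch (u - s + α + β + 1) j / (poch (α - s + 1) j * j !))

theorem phiJ_eq_sum_phiJCoeff (α β : ℤ) (u : ℕ) (s x : ℝ) :
    phiJ α β u s x = ∑ j ∈ range (u + 1), phiJCoeff α β u j s * ((1 - x) / 2) ^ j := by
  simp only [phiJ, phiJCoeff, mul_sum, mul_assoc]

theorem differentiableAt_phiJCoeff {α : ℤ} (β : ℤ) (u : ℕ) {j : ℕ} (hj : (j : ℤ) < -α) :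
    DifferentiableAt ℝ (phiJCoeff α β u j) 0 := by
  have denominator_ne_zero : poch (α - 0 + 1) j * j ! ≠ 0 := by
    refine mul_ne_zero ?_ (by positivity)
    exact_mod_cast poch_intCast_ne_zero (z := α - 0 + 1) (.inr (by lia))
  unfold phiJCoeff
  fun_prop (disch := exact denominator_ne_zero)

theorem hasTopCoeff_deriv_phiJ {α : ℤ} (β : ℤ) {u : ℕ} (hu : (u : ℤ) < -α) :
    HasTopCoeff (fun x => deriv (fun s => phiJ α β u s x) 0) u
      (deriv (phiJCoeff α β u u) 0 * (-1 / 2) ^ u) := by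
  have deriv_eq (x : ℝ) : deriv (fun s => phiJ α β u s x) 0 =
      ∑ j ∈ range (u + 1), deriv (phiJCoeff α β u j) 0 * ((1 - x) / 2) ^ j := by
    have hdiff (j : ℕ) (hj : j ∈ range (u + 1)) : DifferentiableAt ℝ (phiJCoeff α β u j) 0 :=
      differentiableAt_phiJCoeff β u (by have := mem_range.mp hj; lia)
    simp only [phiJ_eq_sum_phiJCoeff]
    rw [deriv_fun_sum fun j hj => (hdiff j hj).mul_const _]
    exact sum_congr rfl fun j hj => deriv_mul_const (hdiff j hj) _
  simpa only [deriv_eq] using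
    hasTopCoeff_one_sub_div_two.sum_mul_pow (fun j => deriv (phiJCoeff α β u j) 0) u

theorem hasDerivAt_div_of_eq_zero {𝕜 : Type*} [NontriviallyNormedField 𝕜] {f g : 𝕜 → 𝕜} {f' x : 𝕜}
    (hf : HasDerivAt f f' x) (hfx : f x = 0) (hg : DifferentiableAt 𝕜 g x) (hgx : g x ≠ 0) :
    HasDerivAt (fun y => f y / g y) (f' / g x) x := by
  convert! hf.div hg.hasDerivAt hgx using 1
  rw [hfx]
  field_simp
  ring

theorem phiJCoeff_self {α β : ℤ} {n v : ℕ} (hv : (n : ℤ) + v + 1 = -α - β) (hvn : v ≤ n) (s : ℝ) :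
    phiJCoeff α β n n s =
      (-1) ^ n * poch (α + 1) n / n ! * (poch (-v - s) n / poch (α + 1 - s) n) := by
  have hparam : (n : ℝ) + α + β + 1 = -v := by
    have : (n : ℤ) + α + β + 1 = -v := by lia
    exact_mod_cast this
  rw [phiJCoeff, show (-α - β - n - 1).toNat = v by lia, max_eq_left hvn,
    max_eq_left (Nat.factorial_le hvn), poch_neg_natCast_self,
    show n - s + α + β + 1 = -v - s by rw [← hparam]; ring,
    show α - s + 1 = α + 1 - s by ring]
  field_simp

theorem deriv_phiJCoeff_self {α β : ℤ} {n v w : ℕ} (hv : (n : ℤ) + v + 1 = -α - β)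
    (hw : n = v + 1 + w) (hn : (n : ℤ) < -α) :
    deriv (phiJCoeff α β n n) 0 = (-1) ^ n * (-1) ^ (v + 1) * (v ! * w !) / n ! := by
  have denominator_ne_zero : poch (α + 1) n ≠ 0 := by
    exact_mod_cast poch_intCast_ne_zero (z := α + 1) (.inr (by lia))
  have numerator_zero : poch (-v) n = 0 := poch_eq_zero_iff.mpr ⟨v, by lia, neg_add_cancel _⟩
  have numerator_deriv :
      HasDerivAt (fun s : ℝ => poch (-v - s) n) ((-1) ^ (v + 1) * (v ! * w !)) 0 := by
    have hroot := hasDerivAt_poch_neg_natCast v w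
    rw [← hw, ← sub_zero (-(v : ℝ))] at hroot
    convert! hroot.comp 0 ((hasDerivAt_id (0 : ℝ)).const_sub (-(v : ℝ))) using 1
    ring
  have quotient_deriv := hasDerivAt_div_of_eq_zero numerator_deriv (by simpa using numerator_zero)
    (g := fun s : ℝ => poch (α + 1 - s) n) (by fun_prop) (by simpa using denominator_ne_zero)
  rw [funext (phiJCoeff_self hv (by lia)), (quotient_deriv.const_mul _).deriv, sub_zero]
  field_simp

/-- The leading coefficient of `P̂_n^{α,β;M}` in the range `⌈(-α-β)/2⌉ ≤ n ≤ -α-β-1`. -/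
noncomputable def middleLeadingCoeff (α β : ℤ) (n : ℕ) : ℝ :=
  (2 * (n : ℤ) + α + β).toNat ! * (-α - β - n - 1).toNat ! /
    ((-1) ^ ((n : ℤ) + α + β) * 2 ^ n * n !)

theorem middleLeadingCoeff_ne_zero (α β : ℤ) (n : ℕ) : middleLeadingCoeff α β n ≠ 0 := by
  have sign_ne_zero : (-1 : ℝ) ^ ((n : ℤ) + α + β) ≠ 0 := zpow_ne_zero _ (by norm_num)
  exact div_ne_zero (by positivity)
    (mul_ne_zero (mul_ne_zero sign_ne_zero (by positivity)) (by positivity))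

theorem middleLeadingCoeff_eq {α β : ℤ} {n v w e : ℕ} (hv : (n : ℤ) + v + 1 = -α - β)
    (hw : n = v + 1 + w) (he : Even (e + (v + 1))) :
    middleLeadingCoeff α β n = (-1) ^ e * (v ! * w !) / (2 ^ n * n !) := by
  have hsign : (-1 : ℝ) ^ ((n : ℤ) + α + β) = (-1) ^ e := by
    have hpow : (-1 : ℝ) ^ e * (-1) ^ (v + 1) = 1 := by rw [← pow_add, he.neg_one_pow]
    rw [show (n : ℤ) + α + β = -((v + 1 : ℕ) : ℤ) by lia, zpow_neg, zpow_natCast]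
    exact (eq_inv_of_mul_eq_one_left hpow).symm
  have hsq : (-1 : ℝ) ^ e * (-1) ^ e = 1 := pow_mul_pow_eq_one e (by norm_num)
  rw [middleLeadingCoeff, hsign, show (2 * (n : ℤ) + α + β).toNat = w by lia,
    show (-α - β - n - 1).toNat = v by lia]
  field_simp
  linear_combination -hsq

theorem ceil_div_two_le_iff {k m : ℤ} : ⌈(k : ℚ) / 2⌉ ≤ m ↔ k ≤ 2 * m := by
  rw [Int.ceil_le, div_le_iff₀ two_pos, mul_comm]
  norm_cast

section Phat

variable {α β : ℤ} (M : ℕ → ℝ) {n : ℕ}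

theorem hasTopCoeff_Phat_of_lt_neg (hn : -α - β ≤ 2 * n) (hn' : (n : ℤ) ≤ -α - β - 1)
    (hnα : (n : ℤ) < -α) :
    HasTopCoeff (Phat α β M n) n (middleLeadingCoeff α β n) := by
  obtain ⟨v, hv⟩ : ∃ v : ℕ, (n : ℤ) + v + 1 = -α - β := ⟨(-α - β - n - 1).toNat, by lia⟩
  obtain ⟨w, hw⟩ : ∃ w : ℕ, n = v + 1 + w := ⟨n - v - 1, by lia⟩
  have Phat_eq : Phat α β M n = fun x =>
      deriv (fun s => phiJ α β n s x) 0 - deriv (fun s => phiJ α β v s x) 0 := by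
    funext x
    rw [Phat, if_pos ⟨ceil_div_two_le_iff.mpr hn, by lia⟩, show (-α - β - n - 1).toNat = v by lia]
  have phi_n := hasTopCoeff_deriv_phiJ β hnα
  have phi_v := (hasTopCoeff_deriv_phiJ β (by lia : (v : ℤ) < -α)).of_lt (by lia : v < n)
  rw [Phat_eq]
  convert! phi_n.sub phi_v using 1
  have hsq : (-1 : ℝ) ^ n * (-1) ^ n = 1 := pow_mul_pow_eq_one n (by norm_num)
  rw [deriv_phiJCoeff_self hv hw hnα, middleLeadingCoeff_eq hv hw (Even.add_self (v + 1)), div_pow]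
  field_simp
  linear_combination (-1) ^ v * v ! * w ! * hsq

theorem hasTopCoeff_Phat_of_neg_le (hαβ : α ≤ β) (hnα : -α ≤ n) (hn : (n : ℤ) ≤ -α - β - 1) :
    HasTopCoeff (Phat α β M n) n (middleLeadingCoeff α β n) := by
  obtain ⟨a, rfl⟩ : ∃ a : ℕ, α = -a := ⟨(-α).toNat, by lia⟩
  obtain ⟨v, hv⟩ : ∃ v : ℕ, (n : ℤ) + v + 1 = -(-a) - β := ⟨(-(-a) - β - n - 1).toNat, by lia⟩
  obtain ⟨k, hk⟩ : ∃ k : ℕ, n = a + k := ⟨n - a, by lia⟩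
  obtain ⟨l, hl⟩ : ∃ l : ℕ, (n : ℤ) + β = l := ⟨(n + β).toNat, by lia⟩
  have Phat_eq : Phat (-a) β M n = fun x =>
      (-1) ^ l * (k ! * l ! * v !) / n ! *
        ((M k - 1)⁻¹ * jacobiP (-a) β v x + ((1 - x) / 2) ^ a * jacobiP a β k x) := by
    funext x
    rw [Phat, if_neg (by lia), if_pos ⟨hnα, hn⟩, show β + (n : ℤ) = l by lia,
      show ((n : ℤ) + -a).toNat = k by lia, show ((n : ℤ) + β).toNat = l by lia,
      show (-(-(a : ℤ)) - β - n - 1).toNat = v by lia, show (-(a : ℤ) + n).toNat = k by lia,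
      show (-(-(a : ℤ))).toNat = a by lia, zpow_natCast]
    push_cast
    rw [neg_neg]
  have lower := ((hasTopCoeff_jacobiP (-a) β v).const_mul (M k - 1)⁻¹).of_lt (by lia : v < n)
  have upper := (hasTopCoeff_one_sub_div_two.pow_of_linear a).mul (hasTopCoeff_jacobiP a β k)
  rw [← hk] at upper
  rw [Phat_eq]
  convert! (lower.add upper).const_mul ((-1) ^ l * (k ! * l ! * v !) / n !) using 1
  have hparam : (a : ℝ) + β + k + 1 = l + 1 := by
    have : (a : ℤ) + β + k + 1 = l + 1 := by lia
    exact_mod_cast this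
  rw [middleLeadingCoeff_eq hv (by lia : n = v + 1 + (l + k))
      (e := l + a) (by rw [Nat.even_iff]; lia), hparam, ← factorial_mul_poch_natCast_add_one,
    show (2 : ℝ) ^ n = 2 ^ a * 2 ^ k by rw [hk, pow_add], div_pow]
  field_simp
  ring

theorem hasTopCoeff_Phat_middle (hαβ : α ≤ β) (hn : -α - β ≤ 2 * n)
    (hn' : (n : ℤ) ≤ -α - β - 1) :
    HasTopCoeff (Phat α β M n) n (middleLeadingCoeff α β n) := by
  rcases lt_or_ge (n : ℤ) (-α) with hnα | hnα
  · exact hasTopCoeff_Phat_of_lt_neg M hn hn' hnα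
  · exact hasTopCoeff_Phat_of_neg_le M hαβ hnα hn'

theorem Phat_eq_jacobiP (hαβ : α ≤ β) (hβ : β ≤ 0)
    (hn : ¬(-α - β ≤ 2 * n ∧ (n : ℤ) ≤ -α - β - 1)) :
    Phat α β M n = jacobiP α β n := by
  funext x
  rw [Phat, if_neg (by rw [ceil_div_two_le_iff]; lia), if_neg (by lia)]

end Phat

end

/-- degree and leading coefficient of `P̂_n^{α,β;M}`. -/
theorem Phat_degree_leadingCoeff
    (α β : ℤ) (M : ℕ → ℝ)
    (hαβ : α ≤ β) (hβ : β ≤ -1)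
    (hM : ∀ i, M i ≠ 0 ∧ M i ≠ 1)
    (n : ℕ) :
    ∃ p : Polynomial ℝ, (∀ x : ℝ, Phat α β M n x = p.eval x) ∧
      p.degree = (n : WithBot ℕ) ∧
      p.leadingCoeff =
        (if ⌈((-α - β : ℤ) : ℚ) / 2⌉ ≤ (n : ℤ) ∧ (n : ℤ) ≤ -α - β - 1 then
            ((2 * (n : ℤ) + α + β).toNat.factorial : ℝ) *
                ((-α - β - (n : ℤ) - 1).toNat.factorial : ℝ) /
              ((-1 : ℝ) ^ ((n : ℤ) + α + β) * 2 ^ n * (n.factorial : ℝ))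
          else poch ((α : ℝ) + (β : ℝ) + (n : ℝ) + 1) n / (2 ^ n * (n.factorial : ℝ))) := by
  simp only [ceil_div_two_le_iff]
  split_ifs with hmiddle
  · have htop := hasTopCoeff_Phat_middle M hαβ hmiddle.1 hmiddle.2
    exact htop.exists_degree_eq_leadingCoeff_eq (middleLeadingCoeff_ne_zero α β n)
  · have poch_ne_zero : poch ((α : ℝ) + β + n + 1) n ≠ 0 := by
      exact_mod_cast poch_intCast_ne_zero (z := α + β + n + 1) (by lia)
    rw [Phat_eq_jacobiP M hαβ (by lia) hmiddle]
    exact (hasTopCoeff_jacobiP α β n).exists_degree_eq_leadingCoeff_eq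
      (div_ne_zero poch_ne_zero (by positivity))
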